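/- Let N be a GNN classifier with L layers and let C be the class of pointed models (M_G,v) of pointed graphs accepted by N. If N ∈ GNN_b^AC with all aggregation functions k-bounded, then N is equivalent to the GML logic classifier ⋁_{(M,v)∈C} φ^{L,k}_{[M,v]}: for every pointed graph (G,v), N(G,v) = true iff (M_G,v) satisfies this disjunction. If N ∈ GNN_s^AC, then N is equivalent to the ML logic classifier ⋁_{(M,v)∈C} φ^{L,1}_{[M,v]}. -/

import Mathlib

/-!
Two pointed models are related by `∼_{n,c}` exactly when they have the same *type*: the type of
depth `0` records the propositions true at the point, and the type of depth `n + 1` additionally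
records, for every type of depth `n`, how many neighbours realise it, capped at `c`
(`gbisim_iff_typ`). There are only finitely many types of each depth.

Three facts about types give the theorem.

* The characteristic formula `φ^{n,c}_{[M,v]}` is true at its own point, and any point satisfying
  it has the type of `(M, v)` (`charF_self`, `typ_eq_of_sat_charF`). For `c ≥ 1` the formula
  defines the type (`sat_charF_iff`). For `c = 0` it does not, because it still contains a
  conjunct with `◇₁`, so that case is argued separately.
* A GNN with `AC` layers and `c`-bounded aggregation gives points of equal type of depth `n` and
  grade `c` the same label after `n` layers (`labelAt_eq_of_gbisim`): the multisets of neighbour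
  labels agree once multiplicities are capped at `c`.
* A GML formula of depth at most `n` and counting rank at most `c` is invariant under `∼_{n,c}`
  (`sat_iff_of_gbisim`). Hence there are finitely many such formulas up to equivalence, and any
  class of them has a finite subclass with the same disjunction (`exists_disjunction`). The
  formulas `φ^{n,c}` have depth at most `n` and rank at most `max c 1`.
-/

attribute [local instance] Classical.propDecidable

noncomputable section

/-! ## Multisets with capped multiplicities, and bounded aggregation functions -/

/-- The multiset obtained from `M` by replacing every multiplicity greater than `k` by `k`. -/
def Multiset.capAt {α : Type*} (k : ℕ) (M : Multiset α) : Multiset α :=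
  haveI := Classical.decEq α
  M.toFinset.val.bind fun a => Multiset.replicate (min (M.count a) k) a

/-- A function on multisets is `k`-bounded if its value on any multiset agrees with its value
on the multiset with all multiplicities capped at `k`. -/
def KBounded {α β : Type*} (k : ℕ) (f : Multiset α → β) : Prop :=
  ∀ M : Multiset α, f M = f (M.capAt k)

/-- A function on multisets is bounded if it is `k`-bounded for some `k`;
it is set-based if it is `1`-bounded. -/
def BoundedAgg {α β : Type*} (f : Multiset α → β) : Prop :=
  ∃ k : ℕ, KBounded k f

/-! ## Finite undirected simple node-labelled graphs -/

structure LGraph (d : ℕ) where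
  n : ℕ
  adj : Fin n → Fin n → Prop
  symm : ∀ u v, adj u v → adj v u
  irrefl : ∀ v, ¬ adj v v
  label : Fin n → Fin d → Bool

/-- The neighbours of a node. -/
def LGraph.nbrs {d : ℕ} (G : LGraph d) (v : Fin G.n) : Finset (Fin G.n) :=
  Finset.univ.filter fun w => G.adj v w

/-- The non-neighbours of a node (excluding the node itself). -/
def LGraph.conbrs {d : ℕ} (G : LGraph d) (v : Fin G.n) : Finset (Fin G.n) :=
  Finset.univ.filter fun w => ¬ G.adj v w ∧ w ≠ v

/-! ## GNN classifiers -/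

/-- The kind of the layers of a GNN: aggregate-combine (`AC`),
aggregate-combine-readout (`ACR`), or extended aggregate-combine (`ACP`, i.e. `AC+`). -/
inductive GNNKind : Type
  | AC | ACR | ACP

/-- A GNN layer from dimension `din` to dimension `dout`: an aggregation function `agg`
(over neighbours), an auxiliary aggregation/readout function `aux` (fed the empty multiset in
`AC` layers, the multiset of all node labels in `ACR` layers, and the multiset of labels of
non-neighbours in `AC+` layers), and a combination function `comb`. -/
structure GNNLayer (din dout : ℕ) where
  m₁ : ℕ
  m₂ : ℕ
  agg : Multiset (Fin din → ℝ) → Fin m₁ → ℝ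
  aux : Multiset (Fin din → ℝ) → Fin m₂ → ℝ
  comb : (Fin din → ℝ) → (Fin m₁ → ℝ) → (Fin m₂ → ℝ) → Fin dout → ℝ

/-- A GNN classifier of dimension `d` with `L` layers of matching dimensions and a
classification function `cls`. -/
structure GNN (d : ℕ) where
  kind : GNNKind
  L : ℕ
  dims : ℕ → ℕ
  dims_zero : dims 0 = d
  layer : (ℓ : ℕ) → ℓ < L → GNNLayer (dims ℓ) (dims (ℓ + 1))
  cls : (Fin (dims L) → ℝ) → Bool

/-- The set of nodes whose labels are fed to the second aggregation function `aux`. -/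
def GNN.auxSet {d : ℕ} (N : GNN d) (G : LGraph d) (v : Fin G.n) : Finset (Fin G.n) :=
  match N.kind with
  | GNNKind.AC => ∅
  | GNNKind.ACR => Finset.univ
  | GNNKind.ACP => G.conbrs v

/-- The labelling of the nodes of `G` after `ℓ` layers of `N` have been applied. -/
def GNN.labelAt {d : ℕ} (N : GNN d) (G : LGraph d) : (ℓ : ℕ) → Fin G.n → Fin (N.dims ℓ) → ℝ
  | 0 => fun v i => if G.label v (Fin.cast N.dims_zero i) = true then 1 else 0
  | ℓ + 1 => fun v =>
      if h : ℓ < N.L then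
        (N.layer ℓ h).comb (N.labelAt G ℓ v)
          ((N.layer ℓ h).agg ((G.nbrs v).val.map fun w => N.labelAt G ℓ w))
          ((N.layer ℓ h).aux ((N.auxSet G v).val.map fun w => N.labelAt G ℓ w))
      else fun _ => 0

/-- The output of the GNN classifier `N` on the pointed graph `(G, v)`. -/
def GNN.eval {d : ℕ} (N : GNN d) (G : LGraph d) (v : Fin G.n) : Bool :=
  N.cls (N.labelAt G N.L v)

/-- The spectrum of `N` at layer `ℓ`: by convention, at layer `0` it is the set of Boolean
vectors of the dimension of `N`; at layer `ℓ + 1` it is the set of vectors that can occur as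
node labels upon application of layer `ℓ + 1` in applications of `N` to graphs. -/
def GNN.spec {d : ℕ} (N : GNN d) : (ℓ : ℕ) → Set (Fin (N.dims ℓ) → ℝ)
  | 0 => {x | ∀ i, x i = 0 ∨ x i = 1}
  | ℓ + 1 => {x | ∃ (G : LGraph d) (v : Fin G.n), N.labelAt G (ℓ + 1) v = x}

/-! ## Modal formulas (GMLC and its fragments GML, ML(E), ML) -/

inductive MForm (d : ℕ) : Type
  | prop : Fin d → MForm d
  | neg : MForm d → MForm d
  | and : MForm d → MForm d → MForm d
  | dia : ℕ → MForm d → MForm d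
  | glob : ℕ → MForm d → MForm d

namespace MForm

/-- Modal depth. -/
def depth {d : ℕ} : MForm d → ℕ
  | prop _ => 0
  | neg φ => depth φ
  | and φ ψ => max (depth φ) (depth ψ)
  | dia _ φ => depth φ + 1
  | glob _ φ => depth φ + 1

/-- Counting rank. -/
def rank {d : ℕ} : MForm d → ℕ
  | prop _ => 0
  | neg φ => rank φ
  | and φ ψ => max (rank φ) (rank ψ)
  | dia k φ => max k (rank φ)
  | glob k φ => max k (rank φ)

/-- Graded modal logic: no global modalities, grades are positive. -/
def IsGML {d : ℕ} : MForm d → Prop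
  | prop _ => True
  | neg φ => IsGML φ
  | and φ ψ => IsGML φ ∧ IsGML ψ
  | dia k φ => 1 ≤ k ∧ IsGML φ
  | glob _ _ => False

/-- Basic modal logic: no global modalities, all graded modalities are `◇₁`. -/
def IsML {d : ℕ} : MForm d → Prop
  | prop _ => True
  | neg φ => IsML φ
  | and φ ψ => IsML φ ∧ IsML ψ
  | dia k φ => k = 1 ∧ IsML φ
  | glob _ _ => False

/-- Graded modal logic with counting: grades are positive. -/
def IsGMLC {d : ℕ} : MForm d → Prop
  | prop _ => True
  | neg φ => IsGMLC φ
  | and φ ψ => IsGMLC φ ∧ IsGMLC ψ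
  | dia k φ => 1 ≤ k ∧ IsGMLC φ
  | glob k φ => 1 ≤ k ∧ IsGMLC φ

/-- Modal logic with the global modality: all modalities are `◇₁` or `∃₁`. -/
def IsMLE {d : ℕ} : MForm d → Prop
  | prop _ => True
  | neg φ => IsMLE φ
  | and φ ψ => IsMLE φ ∧ IsMLE ψ
  | dia k φ => k = 1 ∧ IsMLE φ
  | glob k φ => k = 1 ∧ IsMLE φ

/-- A tautology (needs a proposition to exist). -/
def top {d : ℕ} (hd : 0 < d) : MForm d :=
  neg (and (prop ⟨0, hd⟩) (neg (prop ⟨0, hd⟩)))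

/-- Conjunction of a list of formulas (the empty conjunction is a tautology). -/
def conjList {d : ℕ} (hd : 0 < d) : List (MForm d) → MForm d
  | [] => top hd
  | [φ] => φ
  | φ :: ψ :: rest => and φ (conjList hd (ψ :: rest))

end MForm

/-! ## Finite pointed Kripke models -/

structure KModel (d : ℕ) where
  W : Type
  fintype : Fintype W
  R : W → W → Prop
  symm : ∀ u v, R u v → R v u
  irrefl : ∀ v, ¬ R v v
  val : W → Fin d → Prop

/-- Satisfaction of modal formulas. -/
def KModel.sat {d : ℕ} (M : KModel d) : M.W → MForm d → Prop
  | v, MForm.prop p => M.val v p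
  | v, MForm.neg φ => ¬ M.sat v φ
  | v, MForm.and φ ψ => M.sat v φ ∧ M.sat v ψ
  | v, MForm.dia k φ => k ≤ Nat.card {w : M.W // M.R v w ∧ M.sat w φ}
  | v, MForm.glob k φ => k ≤ Nat.card {w : M.W // M.sat w φ}

/-- A list enumerating the worlds of a finite Kripke model. -/
def KModel.worldList {d : ℕ} (M : KModel d) : List M.W :=
  haveI := M.fintype
  Finset.univ.toList

/-- The Kripke model associated with a node-labelled graph. -/
def LGraph.toKModel {d : ℕ} (G : LGraph d) : KModel d where
  W := Fin G.n
  fintype := inferInstance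
  R := G.adj
  symm := G.symm
  irrefl := G.irrefl
  val := fun v p => G.label v p = true

/-! ## Graded bisimulation games -/

/-- `GBisim c ℓ M v M' v'` holds iff Duplicator has a winning strategy in the `ℓ`-round
`c`-graded bisimulation game starting from configuration `(M, v, M', v')`. -/
def GBisim {d : ℕ} (c : ℕ) : (ℓ : ℕ) → (M : KModel d) → M.W → (M' : KModel d) → M'.W → Prop
  | 0, M, v, M', v' => ∀ p, M.val v p ↔ M'.val v' p
  | ℓ + 1, M, v, M', v' =>
      (∀ p, M.val v p ↔ M'.val v' p) ∧
      (∀ U₁ : Finset M.W, U₁.Nonempty → U₁.card ≤ c → (∀ u ∈ U₁, M.R v u) →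
        ∃ U₂ : Finset M'.W, U₂.card = U₁.card ∧ (∀ u ∈ U₂, M'.R v' u) ∧
          ∀ u₂ ∈ U₂, ∃ u₁ ∈ U₁, GBisim c ℓ M u₁ M' u₂) ∧
      (∀ U₁ : Finset M'.W, U₁.Nonempty → U₁.card ≤ c → (∀ u ∈ U₁, M'.R v' u) →
        ∃ U₂ : Finset M.W, U₂.card = U₁.card ∧ (∀ u ∈ U₂, M.R v u) ∧
          ∀ u₂ ∈ U₂, ∃ u₁ ∈ U₁, GBisim c ℓ M u₂ M' u₁)

/-- `GBisimG c ℓ M v M' v'` holds iff Duplicator has a winning strategy in the `ℓ`-round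
`c`-graded *global* bisimulation game starting from configuration `(M, v, M', v')`:
Spoiler may additionally play global rounds, selecting worlds anywhere in one model. -/
def GBisimG {d : ℕ} (c : ℕ) : (ℓ : ℕ) → (M : KModel d) → M.W → (M' : KModel d) → M'.W → Prop
  | 0, M, v, M', v' => ∀ p, M.val v p ↔ M'.val v' p
  | ℓ + 1, M, v, M', v' =>
      (∀ p, M.val v p ↔ M'.val v' p) ∧
      (∀ U₁ : Finset M.W, U₁.Nonempty → U₁.card ≤ c → (∀ u ∈ U₁, M.R v u) →
        ∃ U₂ : Finset M'.W, U₂.card = U₁.card ∧ (∀ u ∈ U₂, M'.R v' u) ∧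
          ∀ u₂ ∈ U₂, ∃ u₁ ∈ U₁, GBisimG c ℓ M u₁ M' u₂) ∧
      (∀ U₁ : Finset M'.W, U₁.Nonempty → U₁.card ≤ c → (∀ u ∈ U₁, M'.R v' u) →
        ∃ U₂ : Finset M.W, U₂.card = U₁.card ∧ (∀ u ∈ U₂, M.R v u) ∧
          ∀ u₂ ∈ U₂, ∃ u₁ ∈ U₁, GBisimG c ℓ M u₂ M' u₁) ∧
      (∀ U₁ : Finset M.W, U₁.Nonempty → U₁.card ≤ c →
        ∃ U₂ : Finset M'.W, U₂.card = U₁.card ∧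
          ∀ u₂ ∈ U₂, ∃ u₁ ∈ U₁, GBisimG c ℓ M u₁ M' u₂) ∧
      (∀ U₁ : Finset M'.W, U₁.Nonempty → U₁.card ≤ c →
        ∃ U₂ : Finset M.W, U₂.card = U₁.card ∧
          ∀ u₂ ∈ U₂, ∃ u₁ ∈ U₁, GBisimG c ℓ M u₂ M' u₁)

/-! ## Characteristic formulas -/

/-- The conjunction of all propositions true at `v` and of the negations of all
propositions false at `v`. -/
def atomDesc {d : ℕ} (hd : 0 < d) (M : KModel d) (v : M.W) : MForm d :=
  MForm.conjList hd ((List.finRange d).map fun p =>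
    if M.val v p then MForm.prop p else MForm.neg (MForm.prop p))

/-- `|U^n_{v,w}|`: the number of neighbours `u` of `v` with `(M,u) ∼_{n,c} (M,w)`. -/
def USet {d : ℕ} (c n : ℕ) (M : KModel d) (v w : M.W) : ℕ :=
  Nat.card {u : M.W // M.R v u ∧ GBisim c n M u M w}

/-- The characteristic formula `φ^{ℓ,c}_{[M,v]}` of a finite pointed Kripke model for GML. -/
def charF {d : ℕ} (hd : 0 < d) (c : ℕ) (M : KModel d) : ℕ → M.W → MForm d
  | 0, v => atomDesc hd M v
  | n + 1, v =>
      MForm.conjList hd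
        ([atomDesc hd M v] ++
         ((M.worldList.filter fun w => decide (M.R v w)).flatMap fun w =>
            ((List.range c).map (· + 1)).filterMap fun k =>
              if k ≤ min (USet c n M v w) c then some (MForm.dia k (charF hd c M n w))
              else none) ++
         ((M.worldList.filter fun w => decide (M.R v w)).flatMap fun w =>
            ((List.range c).map (· + 1)).filterMap fun k =>
              if USet c n M v w < k ∧ k ≤ c then
                some (MForm.neg (MForm.dia k (charF hd c M n w)))
              else none) ++
         [MForm.neg (MForm.dia 1 (MForm.conjList hd
            ((M.worldList.filter fun w => decide (M.R v w)).map fun w =>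
              MForm.neg (charF hd c M n w))))])

/-- `|U^n_{v,w}|` for the global game. -/
def USetG {d : ℕ} (c n : ℕ) (M : KModel d) (v w : M.W) : ℕ :=
  Nat.card {u : M.W // M.R v u ∧ GBisimG c n M u M w}

/-- `|J^n_w|`: the number of worlds `u` with `(M,u) ∼^∃_{n,c} (M,w)`. -/
def JSetG {d : ℕ} (c n : ℕ) (M : KModel d) (w : M.W) : ℕ :=
  Nat.card {u : M.W // GBisimG c n M u M w}

/-- The global characteristic formula `φ^{ℓ,c}_{∃[M,v]}` for GMLC. -/
def charG {d : ℕ} (hd : 0 < d) (c : ℕ) (M : KModel d) : ℕ → M.W → MForm d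
  | 0, v => atomDesc hd M v
  | n + 1, v =>
      MForm.conjList hd
        ([atomDesc hd M v] ++
         ((M.worldList.filter fun w => decide (M.R v w)).flatMap fun w =>
            ((List.range c).map (· + 1)).filterMap fun k =>
              if k ≤ min (USetG c n M v w) c then some (MForm.dia k (charG hd c M n w))
              else none) ++
         ((M.worldList.filter fun w => decide (M.R v w)).flatMap fun w =>
            ((List.range c).map (· + 1)).filterMap fun k =>
              if USetG c n M v w < k ∧ k ≤ c then
                some (MForm.neg (MForm.dia k (charG hd c M n w)))
              else none) ++
         (M.worldList.flatMap fun w =>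
            ((List.range c).map (· + 1)).filterMap fun k =>
              if k ≤ min (JSetG c n M w) c then some (MForm.glob k (charG hd c M n w))
              else none) ++
         (M.worldList.flatMap fun w =>
            ((List.range c).map (· + 1)).filterMap fun k =>
              if JSetG c n M w < k ∧ k ≤ c then
                some (MForm.neg (MForm.glob k (charG hd c M n w)))
              else none) ++
         [MForm.neg (MForm.dia 1 (MForm.conjList hd
            ((M.worldList.filter fun w => decide (M.R v w)).map fun w =>
              MForm.neg (charG hd c M n w)))),
          MForm.neg (MForm.glob 1 (MForm.conjList hd
            (M.worldList.map fun w => MForm.neg (charG hd c M n w))))])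

/-! ## Two-variable first-order logic with counting quantifiers (C²) -/

/-- C² formulas over unary predicates `p₁, …, p_d` and one binary relation `E`, with the two
variables represented by `Bool` (`false` is the distinguished free variable `x`). -/
inductive C2Form (d : ℕ) : Type
  | prop : Fin d → Bool → C2Form d
  | edge : Bool → Bool → C2Form d
  | eq : Bool → Bool → C2Form d
  | neg : C2Form d → C2Form d
  | and : C2Form d → C2Form d → C2Form d
  | exC : ℕ → Bool → C2Form d → C2Form d

namespace C2Form

/-- Quantifier depth. -/
def depth {d : ℕ} : C2Form d → ℕ
  | prop _ _ => 0
  | edge _ _ => 0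
  | eq _ _ => 0
  | neg φ => depth φ
  | and φ ψ => max (depth φ) (depth ψ)
  | exC _ _ φ => depth φ + 1

/-- Counting rank. -/
def rank {d : ℕ} : C2Form d → ℕ
  | prop _ _ => 0
  | edge _ _ => 0
  | eq _ _ => 0
  | neg φ => rank φ
  | and φ ψ => max (rank φ) (rank ψ)
  | exC k _ φ => max k (rank φ)

/-- Well-formed C² formulas: all counting indices are positive. -/
def IsC2 {d : ℕ} : C2Form d → Prop
  | prop _ _ => True
  | edge _ _ => True
  | eq _ _ => True
  | neg φ => IsC2 φ
  | and φ ψ => IsC2 φ ∧ IsC2 ψ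
  | exC k _ φ => 1 ≤ k ∧ IsC2 φ

/-- FO² formulas: all counting quantifiers are with `k = 1`, i.e. ordinary `∃`. -/
def IsFO2 {d : ℕ} : C2Form d → Prop
  | prop _ _ => True
  | edge _ _ => True
  | eq _ _ => True
  | neg φ => IsFO2 φ
  | and φ ψ => IsFO2 φ ∧ IsFO2 ψ
  | exC k _ φ => k = 1 ∧ IsFO2 φ

/-- The set of free variables of a formula. -/
def free {d : ℕ} : C2Form d → Set Bool
  | prop _ b => {b}
  | edge b₁ b₂ => {b₁, b₂}
  | eq b₁ b₂ => {b₁, b₂}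
  | neg φ => free φ
  | and φ ψ => free φ ∪ free ψ
  | exC _ b φ => free φ \ {b}

end C2Form

/-- A finite first-order structure over the signature with unary predicates `p₁, …, p_d`
and one binary relation `E`. -/
structure FOModel (d : ℕ) where
  W : Type
  fintype : Fintype W
  E : W → W → Prop
  val : W → Fin d → Prop

/-- First-order satisfaction of C² formulas under an assignment of the two variables. -/
def FOModel.sat {d : ℕ} (M : FOModel d) : (Bool → M.W) → C2Form d → Prop
  | a, C2Form.prop p b => M.val (a b) p
  | a, C2Form.edge b₁ b₂ => M.E (a b₁) (a b₂)
  | a, C2Form.eq b₁ b₂ => a b₁ = a b₂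
  | a, C2Form.neg φ => ¬ M.sat a φ
  | a, C2Form.and φ ψ => M.sat a φ ∧ M.sat a ψ
  | a, C2Form.exC k b φ => k ≤ Nat.card {w : M.W // M.sat (Function.update a b w) φ}

/-- The first-order structure associated with a node-labelled graph. -/
def LGraph.toFOModel {d : ℕ} (G : LGraph d) : FOModel d where
  W := Fin G.n
  fintype := inferInstance
  E := G.adj
  val := fun v p => G.label v p = true

/-! ## Two-pebble graded games -/

/-- The positions of the pebbles (pair 1 placed, pair 2 possibly unplaced) form a partial
isomorphism between `M` and `M'`. -/
def PIso {d : ℕ} (M M' : FOModel d) (p₁ : M.W × M'.W) (p₂ : Option (M.W × M'.W)) : Prop :=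
  ((∀ q, M.val p₁.1 q ↔ M'.val p₁.2 q) ∧ (M.E p₁.1 p₁.1 ↔ M'.E p₁.2 p₁.2)) ∧
  ∀ x ∈ p₂,
    (∀ q, M.val x.1 q ↔ M'.val x.2 q) ∧ (M.E x.1 x.1 ↔ M'.E x.2 x.2) ∧
    (p₁.1 = x.1 ↔ p₁.2 = x.2) ∧
    (M.E p₁.1 x.1 ↔ M'.E p₁.2 x.2) ∧ (M.E x.1 p₁.1 ↔ M'.E x.2 p₁.2)

/-- Update the configuration by moving pebble pair `i` (`false` = pair 1, `true` = pair 2)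
to the given pair of worlds. -/
def updCfg {α β : Type*} (p₁ : α × β) (p₂ : Option (α × β)) :
    Bool → α × β → (α × β) × Option (α × β)
  | false, x => (x, p₂)
  | true, x => (p₁, some x)

/-- `PebbleWin c M M' ℓ p₁ p₂` holds iff Duplicator has a winning strategy in the 2-pebble
`ℓ`-round `c`-graded game from the configuration with pebble pair 1 on `p₁` and pebble pair 2
on `p₂` (if placed): she can ensure that the pebble positions always form a partial
isomorphism. -/
def PebbleWin {d : ℕ} (c : ℕ) (M M' : FOModel d) :
    (ℓ : ℕ) → M.W × M'.W → Option (M.W × M'.W) → Prop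
  | 0, p₁, p₂ => PIso M M' p₁ p₂
  | ℓ + 1, p₁, p₂ =>
      PIso M M' p₁ p₂ ∧
      ∀ i : Bool,
        (∀ U : Finset M.W, U.Nonempty → U.card ≤ c →
          ∃ U' : Finset M'.W, U'.card = U.card ∧
            ∀ u' ∈ U', ∃ u ∈ U,
              PebbleWin c M M' ℓ (updCfg p₁ p₂ i (u, u')).1 (updCfg p₁ p₂ i (u, u')).2) ∧
        (∀ U : Finset M'.W, U.Nonempty → U.card ≤ c →
          ∃ U' : Finset M.W, U'.card = U.card ∧
            ∀ u ∈ U', ∃ u' ∈ U,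
              PebbleWin c M M' ℓ (updCfg p₁ p₂ i (u, u')).1 (updCfg p₁ p₂ i (u, u')).2)

end

/-! ### Matching fibres of two finite sets -/

/-- Every set of at most `c` elements of `A` can be answered by an equally large set of elements
of `B`, each having the same colour as some element of the given set. This is one half of a round
of the `c`-graded game, with bisimilarity replaced by equality of colours. -/
def Matched {α β T : Type*} (c : ℕ) (A : Finset α) (B : Finset β) (f : α → T) (g : β → T) : Prop :=
  ∀ U ⊆ A, U.card ≤ c → ∃ U' ⊆ B, U'.card = U.card ∧ ∀ b ∈ U', ∃ a ∈ U, f a = g b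

theorem Matched.min_card_le {α β T : Type*} {c : ℕ} {A : Finset α} {B : Finset β}
    {f : α → T} {g : β → T} (h : Matched c A B f g) (P : α → Prop) (Q : β → Prop)
    (hPQ : ∀ a b, f a = g b → P a → Q b) :
    min (A.filter P).card c ≤ (B.filter Q).card := by
  obtain ⟨U, hU, hc⟩ := Finset.exists_subset_card_eq (min_le_left (A.filter P).card c)
  obtain ⟨U', hU', hc', hm⟩ := h U (hU.trans (Finset.filter_subset _ _))
    (hc ▸ min_le_right _ _)
  rw [← hc, ← hc']
  apply Finset.card_le_card
  intro b hb
  obtain ⟨a, ha, hab⟩ := hm b hb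
  exact Finset.mem_filter.2 ⟨hU' hb, hPQ a b hab (Finset.mem_filter.1 (hU ha)).2⟩

theorem matched_iff {α β T : Type*} (c : ℕ) (A : Finset α) (B : Finset β)
    (f : α → T) (g : β → T) :
    Matched c A B f g ↔
      ∀ t, min (A.filter fun a => f a = t).card c ≤ (B.filter fun b => g b = t).card := by
  constructor
  · intro h t
    exact h.min_card_le _ _ fun a b hab ha => hab ▸ ha
  · intro h U hU hc
    -- The elements of `B` whose colour occurs in `U` are at least as many as `U`, fibre by fibre.
    have hle : U.card ≤ (B.filter fun b => g b ∈ U.image f).card := by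
      rw [Finset.card_eq_sum_card_fiberwise (f := f) (s := U) (t := U.image f)
          (fun a ha => Finset.mem_coe.2 (Finset.mem_image_of_mem f ha)),
        Finset.card_eq_sum_card_fiberwise (f := g) (s := B.filter fun b => g b ∈ U.image f)
          (t := U.image f) (fun b hb => (Finset.mem_filter.1 hb).2)]
      apply Finset.sum_le_sum
      intro t ht
      have h1 : (U.filter fun a => f a = t).card ≤ min (A.filter fun a => f a = t).card c :=
        le_min (Finset.card_le_card (Finset.filter_subset_filter _ hU))
          ((Finset.card_le_card (Finset.filter_subset _ _)).trans hc)
      refine (h1.trans (h t)).trans (Finset.card_le_card ?_)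
      intro b hb
      rw [Finset.mem_filter] at hb
      rw [Finset.mem_filter, Finset.mem_filter]
      exact ⟨⟨hb.1, hb.2 ▸ ht⟩, hb.2⟩
    obtain ⟨U', hU', hc'⟩ := Finset.exists_subset_card_eq hle
    refine ⟨U', hU'.trans (Finset.filter_subset _ _), hc', fun b hb => ?_⟩
    simpa using (Finset.mem_filter.1 (hU' hb)).2

/-! ### Types of pointed models -/

/-- The `c`-graded types of depth `n` over `d` propositions. -/
def Ty (d c : ℕ) : ℕ → Type
  | 0 => Fin d → Prop
  | n + 1 => (Fin d → Prop) × (Ty d c n → Fin (c + 1))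

theorem Ty.finite (d c : ℕ) : ∀ n, Finite (Ty d c n)
  | 0 => inferInstanceAs (Finite (Fin d → Prop))
  | n + 1 =>
    haveI := Ty.finite d c n
    inferInstanceAs (Finite ((Fin d → Prop) × (Ty d c n → Fin (c + 1))))

/-- The set of neighbours of a world. -/
noncomputable def KModel.nb {d : ℕ} (M : KModel d) (v : M.W) : Finset M.W :=
  haveI := M.fintype
  Finset.univ.filter fun w => M.R v w

theorem KModel.mem_nb {d : ℕ} (M : KModel d) (v w : M.W) : w ∈ M.nb v ↔ M.R v w := by
  simp [KModel.nb]

theorem KModel.card_nb {d : ℕ} (M : KModel d) (v : M.W) (P : M.W → Prop) :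
    Nat.card {w : M.W // M.R v w ∧ P w} = ((M.nb v).filter P).card :=
  Nat.subtype_card _ fun w => by simp [KModel.mem_nb]

/-- The `c`-graded type of depth `n` of a pointed model: its propositions and, if `n > 0`, for
each type of depth `n - 1` the number of neighbours of that type, capped at `c`. -/
noncomputable def typ {d : ℕ} (c : ℕ) (M : KModel d) : (n : ℕ) → M.W → Ty d c n
  | 0, v => M.val v
  | n + 1, v => (M.val v, fun t =>
      ⟨min ((M.nb v).filter fun w => typ c M n w = t).card c, by omega⟩)

theorem typ_succ_eq_iff {d : ℕ} (c n : ℕ) (M M' : KModel d) (v : M.W) (v' : M'.W) :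
    typ c M (n + 1) v = typ c M' (n + 1) v' ↔
      (∀ p, M.val v p ↔ M'.val v' p) ∧
      ∀ t, min ((M.nb v).filter fun w => typ c M n w = t).card c =
        min ((M'.nb v').filter fun w => typ c M' n w = t).card c := by
  simp only [typ]
  constructor
  · intro h
    have h1 := congrArg Prod.fst h
    have h2 := congrArg Prod.snd h
    refine ⟨fun p => iff_of_eq (congrFun h1 p), fun t => ?_⟩
    exact congrArg Fin.val (congrFun h2 t)
  · rintro ⟨h1, h2⟩
    refine Prod.ext (funext fun p => propext (h1 p)) (funext fun t => Fin.ext (h2 t))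

theorem gbisim_iff_typ {d : ℕ} (c : ℕ) : ∀ (n : ℕ) (M : KModel d) (v : M.W) (M' : KModel d)
    (v' : M'.W), GBisim c n M v M' v' ↔ typ c M n v = typ c M' n v'
  | 0, M, v, M', v' => by
    simp only [GBisim, typ]
    exact ⟨fun h => funext fun p => propext (h p), fun h p => iff_of_eq (congrFun h p)⟩
  | n + 1, M, v, M', v' => by
    have hm : (∀ t, min ((M.nb v).filter fun w => typ c M n w = t).card c =
        min ((M'.nb v').filter fun w => typ c M' n w = t).card c) ↔
        Matched c (M.nb v) (M'.nb v') (typ c M n) (typ c M' n) ∧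
        Matched c (M'.nb v') (M.nb v) (typ c M' n) (typ c M n) := by
      rw [matched_iff, matched_iff, ← forall_and]
      refine forall_congr' fun t => ?_
      omega
    rw [typ_succ_eq_iff, hm]
    simp only [GBisim]
    refine and_congr Iff.rfl (and_congr ?_ ?_)
    · constructor
      · intro h U hU hc
        rcases U.eq_empty_or_nonempty with rfl | hne
        · exact ⟨∅, by simp⟩
        obtain ⟨U', h1, h2, h3⟩ := h U hne hc fun u hu => (M.mem_nb v u).1 (hU hu)
        refine ⟨U', fun u hu => (M'.mem_nb v' u).2 (h2 u hu), h1, fun b hb => ?_⟩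
        obtain ⟨a, ha, hab⟩ := h3 b hb
        exact ⟨a, ha, (gbisim_iff_typ c n M a M' b).1 hab⟩
      · intro h U _ hc hU
        obtain ⟨U', h1, h2, h3⟩ := h U (fun u hu => (M.mem_nb v u).2 (hU u hu)) hc
        refine ⟨U', h2, fun u hu => (M'.mem_nb v' u).1 (h1 hu), fun b hb => ?_⟩
        obtain ⟨a, ha, hab⟩ := h3 b hb
        exact ⟨a, ha, (gbisim_iff_typ c n M a M' b).2 hab⟩
    · constructor
      · intro h U hU hc
        rcases U.eq_empty_or_nonempty with rfl | hne
        · exact ⟨∅, by simp⟩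
        obtain ⟨U', h1, h2, h3⟩ := h U hne hc fun u hu => (M'.mem_nb v' u).1 (hU hu)
        refine ⟨U', fun u hu => (M.mem_nb v u).2 (h2 u hu), h1, fun b hb => ?_⟩
        obtain ⟨a, ha, hab⟩ := h3 b hb
        exact ⟨a, ha, ((gbisim_iff_typ c n M b M' a).1 hab).symm⟩
      · intro h U _ hc hU
        obtain ⟨U', h1, h2, h3⟩ := h U (fun u hu => (M'.mem_nb v' u).2 (hU u hu)) hc
        refine ⟨U', h2, fun u hu => (M.mem_nb v u).1 (h1 hu), fun b hb => ?_⟩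
        obtain ⟨a, ha, hab⟩ := h3 b hb
        exact ⟨a, ha, (gbisim_iff_typ c n M b M' a).2 hab.symm⟩

theorem GBisim.val_iff {d c n : ℕ} {M M' : KModel d} {v : M.W} {v' : M'.W}
    (h : GBisim c n M v M' v') (p : Fin d) : M.val v p ↔ M'.val v' p := by
  cases n with
  | zero => exact h p
  | succ n => exact h.1 p

/-- Bisimilarity for one more round implies bisimilarity. -/
theorem GBisim.of_succ {d c : ℕ} : ∀ {n : ℕ} {M M' : KModel d} {v : M.W} {v' : M'.W},
    GBisim c (n + 1) M v M' v' → GBisim c n M v M' v'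
  | 0, _, _, _, _, h => h.1
  | n + 1, M, M', v, v', h => by
    refine ⟨h.1, fun U hne hc hU => ?_, fun U hne hc hU => ?_⟩
    · obtain ⟨U', h1, h2, h3⟩ := h.2.1 U hne hc hU
      refine ⟨U', h1, h2, fun b hb => ?_⟩
      obtain ⟨a, ha, hab⟩ := h3 b hb
      exact ⟨a, ha, GBisim.of_succ hab⟩
    · obtain ⟨U', h1, h2, h3⟩ := h.2.2 U hne hc hU
      refine ⟨U', h1, h2, fun b hb => ?_⟩
      obtain ⟨a, ha, hab⟩ := h3 b hb
      exact ⟨a, ha, GBisim.of_succ hab⟩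

/-- Bisimilar points have, up to the cap `c`, equally many neighbours with any property that is
invariant under bisimilarity for one round less. -/
theorem GBisim.min_card_eq {d c n : ℕ} {M M' : KModel d} {v : M.W} {v' : M'.W}
    (h : GBisim c (n + 1) M v M' v') (P : M.W → Prop) (Q : M'.W → Prop)
    (hPQ : ∀ a b, GBisim c n M a M' b → (P a ↔ Q b)) :
    min ((M.nb v).filter P).card c = min ((M'.nb v').filter Q).card c := by
  have ht := ((typ_succ_eq_iff c n M M' v v').1 ((gbisim_iff_typ c (n + 1) M v M' v').1 h)).2
  have h1 : Matched c (M.nb v) (M'.nb v') (typ c M n) (typ c M' n) :=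
    (matched_iff _ _ _ _ _).2 fun t => by have := ht t; omega
  have h2 : Matched c (M'.nb v') (M.nb v) (typ c M' n) (typ c M n) :=
    (matched_iff _ _ _ _ _).2 fun t => by have := ht t; omega
  have h3 := h1.min_card_le P Q fun a b hab =>
    (hPQ a b ((gbisim_iff_typ c n M a M' b).2 hab)).1
  have h4 := h2.min_card_le Q P fun b a hab =>
    (hPQ a b ((gbisim_iff_typ c n M a M' b).2 hab.symm)).2
  omega

/-! ### Invariance of graded modal formulas -/

theorem sat_iff_of_gbisim {d c : ℕ} (φ : MForm d) : ∀ {n : ℕ} {M M' : KModel d} {v : M.W}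
    {v' : M'.W}, φ.IsGML → φ.depth ≤ n → φ.rank ≤ c → GBisim c n M v M' v' →
    (M.sat v φ ↔ M'.sat v' φ) := by
  induction φ with
  | prop p => intro n M M' v v' _ _ _ h; exact h.val_iff p
  | neg φ ih => intro n M M' v v' h1 h2 h3 h; exact not_congr (ih h1 h2 h3 h)
  | and φ ψ ih1 ih2 =>
    intro n M M' v v' h1 h2 h3 h
    simp only [MForm.depth, MForm.rank, max_le_iff] at h2 h3
    exact and_congr (ih1 h1.1 h2.1 h3.1 h) (ih2 h1.2 h2.2 h3.2 h)
  | dia k φ ih =>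
    intro n M M' v v' h1 h2 h3 h
    simp only [MForm.depth, MForm.rank, max_le_iff] at h2 h3
    obtain ⟨m, rfl⟩ : ∃ m, n = m + 1 := ⟨n - 1, by omega⟩
    have := h.min_card_eq (fun w => M.sat w φ) (fun w => M'.sat w φ)
      fun a b hab => ih h1.2 (by omega) h3.2 hab
    simp only [KModel.sat, KModel.card_nb]
    omega
  | glob k φ ih => intro n M M' v v' h1; exact h1.elim

theorem sat_conjList {d : ℕ} (hd : 0 < d) (M : KModel d) (v : M.W) (l : List (MForm d)) :
    M.sat v (MForm.conjList hd l) ↔ ∀ φ ∈ l, M.sat v φ := by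
  induction l with
  | nil => simp [MForm.conjList, MForm.top, KModel.sat]
  | cons φ l ih =>
    cases l with
    | nil => simp [MForm.conjList]
    | cons ψ l => simp only [MForm.conjList, KModel.sat, ih, List.forall_mem_cons]

/-! ### Characteristic formulas -/

theorem sat_atomDesc {d : ℕ} (hd : 0 < d) (M M' : KModel d) (v : M.W) (v' : M'.W) :
    M'.sat v' (atomDesc hd M v) ↔ ∀ p, M.val v p ↔ M'.val v' p := by
  simp only [atomDesc, sat_conjList, List.forall_mem_map, List.mem_finRange, true_imp_iff]
  refine forall_congr' fun p => ?_
  by_cases h : M.val v p <;> simp [h, KModel.sat]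

/-- The semantics of the recursion step of the characteristic formulas. -/
theorem sat_charF_succ {d : ℕ} (hd : 0 < d) (c n : ℕ) (M M' : KModel d) (v : M.W) (v' : M'.W) :
    M'.sat v' (charF hd c M (n + 1) v) ↔
      (∀ p, M.val v p ↔ M'.val v' p) ∧
      (∀ w, M.R v w → ∀ k, 1 ≤ k → k ≤ c →
        (k ≤ USet c n M v w ↔
          k ≤ ((M'.nb v').filter fun u => M'.sat u (charF hd c M n w)).card)) ∧
      ∀ u, M'.R v' u → ∃ w, M.R v w ∧ M'.sat u (charF hd c M n w) := by
  have hlast : M'.sat v' (MForm.neg (MForm.dia 1 (MForm.conjList hd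
            ((M.worldList.filter fun w => decide (M.R v w)).map fun w =>
              MForm.neg (charF hd c M n w))))) ↔
      ∀ u, M'.R v' u → ∃ w, M.R v w ∧ M'.sat u (charF hd c M n w) := by
    simp only [KModel.sat, KModel.card_nb, sat_conjList, Nat.one_le_iff_ne_zero, ne_eq,
      Finset.card_eq_zero, not_not, Finset.filter_eq_empty_iff, KModel.mem_nb,
      List.forall_mem_map, List.mem_filter, KModel.worldList, Finset.mem_toList,
      Finset.mem_univ, true_and, decide_eq_true_eq]
    push Not
    rfl
  simp only [charF, sat_conjList, List.forall_mem_append, List.forall_mem_singleton, hlast,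
    sat_atomDesc, and_assoc]
  refine and_congr Iff.rfl ?_
  rw [← and_assoc]
  refine and_congr ?_ Iff.rfl
  simp only [List.mem_flatMap, List.mem_filterMap, List.mem_filter, KModel.worldList,
      Finset.mem_toList, Finset.mem_univ, true_and, decide_eq_true_eq, List.mem_map,
      List.mem_range]
  constructor
  · rintro ⟨h1, h2⟩ w hw k hk hkc
    constructor
    · intro hU
      have := h1 (MForm.dia k (charF hd c M n w))
        ⟨w, hw, k, ⟨k - 1, by omega, by omega⟩, if_pos (by omega)⟩
      simpa only [KModel.sat, KModel.card_nb] using this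
    · intro hU
      by_contra hlt
      have := h2 (MForm.neg (MForm.dia k (charF hd c M n w)))
        ⟨w, hw, k, ⟨k - 1, by omega, by omega⟩, if_pos (by omega)⟩
      simp only [KModel.sat, KModel.card_nb] at this
      exact this hU
  · intro h
    constructor
    · rintro φ ⟨w, hw, k, ⟨j, hj, rfl⟩, hφ⟩
      split_ifs at hφ with hk
      obtain rfl := Option.some.inj hφ
      simp only [KModel.sat, KModel.card_nb]
      exact (h w hw (j + 1) (by omega) (by omega)).1 (by omega)
    · rintro φ ⟨w, hw, k, ⟨j, hj, rfl⟩, hφ⟩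
      split_ifs at hφ with hk
      obtain rfl := Option.some.inj hφ
      simp only [KModel.sat, KModel.card_nb]
      intro hc
      have := (h w hw (j + 1) (by omega) (by omega)).2 hc
      omega

theorem USet_eq {d : ℕ} (c n : ℕ) (M : KModel d) (v w : M.W) :
    USet c n M v w = ((M.nb v).filter fun u => typ c M n u = typ c M n w).card := by
  simp only [USet, gbisim_iff_typ, KModel.card_nb]

/-- For positive grades, the characteristic formula of `(M, v)` defines the type of `(M, v)`. -/
theorem sat_charF_iff {d : ℕ} (hd : 0 < d) (c : ℕ) (hc : 1 ≤ c) : ∀ (n : ℕ) (M M' : KModel d)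
    (v : M.W) (v' : M'.W), M'.sat v' (charF hd c M n v) ↔ typ c M n v = typ c M' n v'
  | 0, M, M', v, v' => by
    rw [← gbisim_iff_typ]
    simp only [charF, sat_atomDesc, GBisim]
  | n + 1, M, M', v, v' => by
    rw [sat_charF_succ, typ_succ_eq_iff]
    simp only [sat_charF_iff hd c hc n, USet_eq]
    refine and_congr Iff.rfl ⟨?_, ?_⟩
    · rintro ⟨h1, h2⟩ t
      by_cases ht : ∃ w, M.R v w ∧ typ c M n w = t
      · obtain ⟨w, hw, rfl⟩ := ht
        have h3 := h1 w hw
        simp only [eq_comm (a := typ c M n w)] at h3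
        -- Two numbers passing the same thresholds `1, …, c` have the same minimum with `c`.
        refine eq_of_forall_le_iff fun k => ?_
        rcases Nat.eq_zero_or_pos k with rfl | hk
        · simp
        · by_cases hkc : k ≤ c
          · simp only [le_min_iff, hkc, and_true]
            exact h3 k hk hkc
          · simp [hkc]
      · have e1 : ((M.nb v).filter fun w => typ c M n w = t) = ∅ := by
          rw [Finset.filter_eq_empty_iff]
          exact fun w hw hwt => ht ⟨w, (M.mem_nb v w).1 hw, hwt⟩
        have e2 : ((M'.nb v').filter fun w => typ c M' n w = t) = ∅ := by
          rw [Finset.filter_eq_empty_iff]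
          intro u hu hut
          obtain ⟨w, hw, hwu⟩ := h2 u ((M'.mem_nb v' u).1 hu)
          exact ht ⟨w, hw, hwu.trans hut⟩
        rw [e1, e2]
        rfl
    · intro h
      refine ⟨fun w hw k hk hkc => ?_, fun u hu => ?_⟩
      · have := h (typ c M n w)
        simp only [eq_comm (a := typ c M n w)]
        omega
      · have hpos : 0 < ((M'.nb v').filter fun w => typ c M' n w = typ c M' n u).card :=
          Finset.card_pos.2 ⟨u, Finset.mem_filter.2 ⟨(M'.mem_nb v' u).2 hu, rfl⟩⟩
        have := h (typ c M' n u)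
        have hpos' : 0 < ((M.nb v).filter fun w => typ c M n w = typ c M' n u).card := by omega
        obtain ⟨w, hw⟩ := Finset.card_pos.1 hpos'
        rw [Finset.mem_filter, KModel.mem_nb] at hw
        exact ⟨w, hw⟩

theorem typ_eq_of_sat_charF {d : ℕ} (hd : 0 < d) (c n : ℕ) (M M' : KModel d) (v : M.W)
    (v' : M'.W) (h : M'.sat v' (charF hd c M n v)) : typ c M n v = typ c M' n v' := by
  rcases Nat.eq_zero_or_pos c with rfl | hc
  · cases n with
    | zero =>
      rw [← gbisim_iff_typ]
      exact (sat_atomDesc hd M M' v v').1 h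
    | succ n =>
      -- For grade `0` all counts are capped at `0`, so the type is given by the propositions.
      rw [typ_succ_eq_iff]
      exact ⟨((sat_charF_succ hd 0 n M M' v v').1 h).1, fun t => by simp⟩
  · exact (sat_charF_iff hd c hc n M M' v v').1 h

theorem charF_self {d : ℕ} (hd : 0 < d) (c n : ℕ) (M : KModel d) (v : M.W) :
    M.sat v (charF hd c M n v) := by
  rcases Nat.eq_zero_or_pos c with rfl | hc
  · induction n generalizing v with
    | zero => exact (sat_atomDesc hd M M v v).2 fun _ => Iff.rfl
    | succ n ih =>
      rw [sat_charF_succ]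
      exact ⟨fun _ => Iff.rfl, fun w _ k hk hk0 => by omega, fun u hu => ⟨u, hu, ih u⟩⟩
  · exact (sat_charF_iff hd c hc n M M v v).2 rfl

/-- The syntactic properties of the characteristic formulas of depth `n` and grade `c`. The bound
on the counting rank is `max c 1` since the formulas contain `◇₁` even when `c = 0`. -/
def Admissible {d : ℕ} (c n : ℕ) (φ : MForm d) : Prop :=
  φ.IsGML ∧ φ.depth ≤ n ∧ φ.rank ≤ max c 1 ∧ (c = 1 → φ.IsML)

theorem Admissible.neg {d c n : ℕ} {φ : MForm d} (h : Admissible c n φ) :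
    Admissible c n (MForm.neg φ) := h

theorem Admissible.dia {d c n k : ℕ} {φ : MForm d} (h : Admissible c n φ) (hk : 1 ≤ k)
    (hkc : k ≤ max c 1) : Admissible c (n + 1) (MForm.dia k φ) :=
  ⟨⟨hk, h.1⟩, Nat.succ_le_succ h.2.1, max_le hkc h.2.2.1,
    fun hc => ⟨by subst hc; simp at hkc; omega, h.2.2.2 hc⟩⟩

theorem Admissible.conjList {d c n : ℕ} (hd : 0 < d) (l : List (MForm d))
    (h : ∀ φ ∈ l, Admissible c n φ) : Admissible c n (MForm.conjList hd l) := by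
  induction l with
  | nil => simp [MForm.conjList, MForm.top, Admissible, MForm.IsGML, MForm.IsML, MForm.depth,
      MForm.rank]
  | cons φ l ih =>
    rw [List.forall_mem_cons] at h
    cases l with
    | nil => exact h.1
    | cons ψ l =>
      have h2 := ih h.2
      exact ⟨⟨h.1.1, h2.1⟩, max_le h.1.2.1 h2.2.1, max_le h.1.2.2.1 h2.2.2.1,
        fun hc => ⟨h.1.2.2.2 hc, h2.2.2.2 hc⟩⟩

theorem admissible_atomDesc {d : ℕ} (hd : 0 < d) (c n : ℕ) (M : KModel d) (v : M.W) :
    Admissible c n (atomDesc hd M v) := by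
  refine Admissible.conjList hd _ ?_
  simp only [List.forall_mem_map]
  intro p _
  split_ifs <;> simp [Admissible, MForm.IsGML, MForm.IsML, MForm.depth, MForm.rank]

theorem admissible_charF {d : ℕ} (hd : 0 < d) (c : ℕ) (M : KModel d) :
    ∀ (n : ℕ) (v : M.W), Admissible c n (charF hd c M n v)
  | 0, v => admissible_atomDesc hd c 0 M v
  | n + 1, v => by
    rw [charF]
    refine Admissible.conjList hd _ ?_
    simp only [List.forall_mem_append, List.forall_mem_singleton]
    refine ⟨⟨⟨admissible_atomDesc hd c _ M v, ?_⟩, ?_⟩, ?_⟩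
    · simp only [List.mem_flatMap, List.mem_filterMap, List.mem_map, List.mem_range]
      rintro φ ⟨w, hw, k, ⟨j, hj, rfl⟩, hφ⟩
      split_ifs at hφ with hk
      obtain rfl := Option.some.inj hφ
      exact (admissible_charF hd c M n w).dia (by omega) (by omega)
    · simp only [List.mem_flatMap, List.mem_filterMap, List.mem_map, List.mem_range]
      rintro φ ⟨w, hw, k, ⟨j, hj, rfl⟩, hφ⟩
      split_ifs at hφ with hk
      obtain rfl := Option.some.inj hφ
      exact ((admissible_charF hd c M n w).dia (by omega) (by omega)).neg
    · refine (Admissible.dia (Admissible.conjList hd _ ?_) le_rfl (le_max_right _ _)).neg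
      simp only [List.forall_mem_map]
      exact fun w _ => (admissible_charF hd c M n w).neg

/-! ### Finite disjunctions -/

/-- The disjunction of an arbitrary class of admissible formulas is expressed by a single one. The
truth set of an admissible formula is determined by the finite set of types at which it holds, so
one representative for each such set suffices. -/
theorem exists_disjunction {d : ℕ} (hd : 0 < d) (c n : ℕ) (Φ : Set (MForm d))
    (hΦ : ∀ φ ∈ Φ, Admissible c n φ) :
    ∃ ψ : MForm d, Admissible c n ψ ∧
      ∀ (M : KModel d) (w : M.W), M.sat w ψ ↔ ∃ φ ∈ Φ, M.sat w φ := by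
  have := Ty.finite d (max c 1) n
  let S : MForm d → Set (Ty d (max c 1) n) := fun φ =>
    {t | ∃ (M : KModel d) (v : M.W), typ (max c 1) M n v = t ∧ M.sat v φ}
  have hS : ∀ φ ∈ Φ, ∀ (M : KModel d) (w : M.W), M.sat w φ ↔ typ (max c 1) M n w ∈ S φ := by
    intro φ hφ M w
    refine ⟨fun h => ⟨M, w, rfl, h⟩, ?_⟩
    rintro ⟨M', v, ht, hv⟩
    have ha := hΦ φ hφ
    exact (sat_iff_of_gbisim φ ha.1 ha.2.1 ha.2.2.1 ((gbisim_iff_typ _ n M' v M w).2 ht)).1 hv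
  obtain ⟨Φ₀, hsub, hbij⟩ := Set.exists_subset_bijOn Φ S
  have hfin : Φ₀.Finite := hbij.finite_iff_finite.2 (Set.toFinite _)
  refine ⟨MForm.neg (MForm.conjList hd (hfin.toFinset.toList.map MForm.neg)), ?_, ?_⟩
  · refine (Admissible.conjList hd _ ?_).neg
    simp only [List.forall_mem_map, Finset.mem_toList, Set.Finite.mem_toFinset]
    exact fun φ hφ => (hΦ φ (hsub hφ)).neg
  · intro M w
    simp only [KModel.sat, sat_conjList, List.forall_mem_map, Finset.mem_toList,
      Set.Finite.mem_toFinset]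
    push Not
    constructor
    · rintro ⟨φ, hφ, h⟩
      exact ⟨φ, hsub hφ, h⟩
    · rintro ⟨φ, hφ, h⟩
      obtain ⟨φ₀, hφ₀, he⟩ := hbij.surjOn ⟨φ, hφ, rfl⟩
      refine ⟨φ₀, hφ₀, ?_⟩
      rw [hS φ₀ (hsub hφ₀), he, ← hS φ hφ]
      exact h

/-! ### Bounded aggregation -/

theorem count_capAt {α : Type*} (k : ℕ) (M : Multiset α) (a : α) :
    (M.capAt k).count a = min (M.count a) k := by
  have hcl : ∀ (_ : DecidableEq α), (M.toFinset.val.bind fun b =>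
      Multiset.replicate (min (M.count b) k) b).count a = min (M.count a) k := by
    intro _
    rw [Multiset.count_bind]
    simp only [Multiset.count_replicate]
    change ∑ b ∈ M.toFinset, (if b = a then min (M.count b) k else 0) = _
    rw [Finset.sum_ite_eq']
    split_ifs with h
    · rfl
    · rw [Multiset.mem_toFinset] at h
      rw [Multiset.count_eq_zero_of_notMem h]
      simp
  unfold Multiset.capAt
  convert hcl (Classical.decEq α) using 2

theorem KBounded.congr {α β : Type*} {k : ℕ} {f : Multiset α → β} (hf : KBounded k f)
    {X Y : Multiset α} (h : ∀ a, min (X.count a) k = min (Y.count a) k) : f X = f Y := by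
  have : X.capAt k = Y.capAt k := Multiset.ext.2 fun a => by rw [count_capAt, count_capAt, h]
  rw [hf X, hf Y, this]

theorem LGraph.nb_toKModel {d : ℕ} (G : LGraph d) (v : Fin G.n) :
    G.toKModel.nb v = G.nbrs v := by
  ext w
  refine (KModel.mem_nb G.toKModel v w).trans ?_
  have h : ∀ u : Fin G.n, u ∈ G.nbrs v ↔ G.adj v u := fun u => by simp [LGraph.nbrs]
  exact (h w).symm

theorem labelAt_eq_of_gbisim {d : ℕ} (N : GNN d) (hN : N.kind = GNNKind.AC) (k : ℕ)
    (hk : ∀ (ℓ : ℕ) (h : ℓ < N.L), KBounded k (N.layer ℓ h).agg) :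
    ∀ (ℓ : ℕ) (G G' : LGraph d) (v : Fin G.n) (v' : Fin G'.n),
      GBisim k ℓ G.toKModel v G'.toKModel v' → N.labelAt G ℓ v = N.labelAt G' ℓ v'
  | 0, G, G', v, v', h => by
    funext i
    have := h (Fin.cast N.dims_zero i)
    simp only [LGraph.toKModel] at this
    simp only [GNN.labelAt, this]
  | ℓ + 1, G, G', v, v', h => by
    simp only [GNN.labelAt]
    split_ifs with hℓ
    · have haux : ∀ (H : LGraph d) (u : Fin H.n), N.auxSet H u = ∅ := by
        intro H u
        simp only [GNN.auxSet, hN]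
      rw [haux, haux, labelAt_eq_of_gbisim N hN k hk ℓ G G' v v' h.of_succ]
      congr 1
      refine (hk ℓ hℓ).congr fun a => ?_
      have hcard := h.min_card_eq (fun w => a = N.labelAt G ℓ w)
        (fun w => a = N.labelAt G' ℓ w)
        fun w w' hww => by rw [labelAt_eq_of_gbisim N hN k hk ℓ G G' w w' hww]
      rw [LGraph.nb_toKModel, LGraph.nb_toKModel] at hcard
      rw [Multiset.count_map, Multiset.count_map]
      exact hcard
    · rfl

/-- The common form of the two parts of the theorem: when `k = 1`, the defining formula is
moreover in ML. -/
theorem exists_char_disjunction {d : ℕ} (hd : 0 < d) (N : GNN d) (hN : N.kind = GNNKind.AC)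
    (k : ℕ) (hk : ∀ (ℓ : ℕ) (h : ℓ < N.L), KBounded k (N.layer ℓ h).agg) :
    ∃ ψ : MForm d, Admissible k N.L ψ ∧
      (∀ (M' : KModel d) (w : M'.W),
        M'.sat w ψ ↔
          ∃ (G : LGraph d) (v : Fin G.n),
            N.eval G v = true ∧ M'.sat w (charF hd k (LGraph.toKModel G) N.L v)) ∧
      (∀ (G : LGraph d) (v : Fin G.n),
        N.eval G v = true ↔ (LGraph.toKModel G).sat v ψ) := by
  obtain ⟨ψ, hψ, hsat⟩ := exists_disjunction hd k N.L
    {φ | ∃ (G : LGraph d) (v : Fin G.n), N.eval G v = true ∧ φ = charF hd k G.toKModel N.L v}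
    (by rintro φ ⟨G, v, _, rfl⟩; exact admissible_charF hd k _ _ _)
  have hsat' : ∀ (M' : KModel d) (w : M'.W), M'.sat w ψ ↔
      ∃ (G : LGraph d) (v : Fin G.n),
        N.eval G v = true ∧ M'.sat w (charF hd k (LGraph.toKModel G) N.L v) := by
    intro M' w
    rw [hsat]
    constructor
    · rintro ⟨_, ⟨G, v, h, rfl⟩, hs⟩
      exact ⟨G, v, h, hs⟩
    · rintro ⟨G, v, h, hs⟩
      exact ⟨_, ⟨G, v, h, rfl⟩, hs⟩
  refine ⟨ψ, hψ, hsat', fun G v => ?_⟩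
  rw [hsat' G.toKModel v]
  constructor
  · intro h
    exact ⟨G, v, h, charF_self hd k N.L G.toKModel v⟩
  · rintro ⟨G', v', h, hs⟩
    have hb := (gbisim_iff_typ k N.L G'.toKModel v' G.toKModel v).2
      (typ_eq_of_sat_charF hd k N.L _ _ _ _ hs)
    rw [← h, GNN.eval, GNN.eval, labelAt_eq_of_gbisim N hN k hk N.L G' G v' v hb]


/-- Let `N` be a GNN classifier with `L` layers and let `C` be the class of
pointed models `(M_G,v)` of pointed graphs accepted by `N`. If `N ∈ GNN_b^AC` with all
aggregation functions `k`-bounded, then `N` is equivalent to the GML logic classifier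
`⋁_{(M,v)∈C} φ^{L,k}_{[M,v]}` (realised by a GML formula `ψ` semantically equal to that
disjunction): for every pointed graph `(G,v)`, `N(G,v) = true` iff `(M_G,v)` satisfies the
disjunction. If `N ∈ GNN_s^AC`, then `N` is equivalent to the corresponding ML logic
classifier `⋁_{(M,v)∈C} φ^{L,1}_{[M,v]}`. -/
theorem gnn_ac_equiv_char_disjunction :
    ∀ (d : ℕ) (hd : 0 < d) (N : GNN d), N.kind = GNNKind.AC →
      (∀ k : ℕ,
        (∀ (ℓ : ℕ) (h : ℓ < N.L), KBounded k (N.layer ℓ h).agg) →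
        ∃ ψ : MForm d, ψ.IsGML ∧
          (∀ (M' : KModel d) (w : M'.W),
            M'.sat w ψ ↔
              ∃ (G : LGraph d) (v : Fin G.n),
                N.eval G v = true ∧ M'.sat w (charF hd k (LGraph.toKModel G) N.L v)) ∧
          (∀ (G : LGraph d) (v : Fin G.n),
            N.eval G v = true ↔ (LGraph.toKModel G).sat v ψ)) ∧
      ((∀ (ℓ : ℕ) (h : ℓ < N.L), KBounded 1 (N.layer ℓ h).agg) →
        ∃ ψ : MForm d, ψ.IsML ∧
          (∀ (M' : KModel d) (w : M'.W),
            M'.sat w ψ ↔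
              ∃ (G : LGraph d) (v : Fin G.n),
                N.eval G v = true ∧ M'.sat w (charF hd 1 (LGraph.toKModel G) N.L v)) ∧
          (∀ (G : LGraph d) (v : Fin G.n),
            N.eval G v = true ↔ (LGraph.toKModel G).sat v ψ)) := by
  intro d hd N hN
  refine ⟨fun k hk => ?_, fun hk => ?_⟩
  · obtain ⟨ψ, hψ, h1, h2⟩ := exists_char_disjunction hd N hN k hk
    exact ⟨ψ, hψ.1, h1, h2⟩
  · obtain ⟨ψ, hψ, h1, h2⟩ := exists_char_disjunction hd N hN 1 hk
    exact ⟨ψ, hψ.2.2.2 rfl, h1, h2⟩
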